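/- arXiv:2602.05046 — 4 statements merged into one kernel-verified Lean document; each statement's English description precedes it below -/
import Mathlib

section
/- Let M be a real symmetric positive definite n×n matrix. Then for every index k, the product of the k-th diagonal entry of M and the k-th diagonal entry of M⁻¹ is at least 1: M_{kk}·(M⁻¹)_{kk} ≥ 1. -/
open Matrix

/-- For a real symmetric positive definite matrix `M`, the product of the
`k`-th diagonal entry of `M` and the `k`-th diagonal entry of `M⁻¹` is at
least `1`. -/
theorem diag_mul_inv_diag_ge_one (n : ℕ) (M : Matrix (Fin n) (Fin n) ℝ)
    (hM : M.PosDef) (k : Fin n) :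
    1 ≤ M k k * M⁻¹ k k := by
  have hpos : 0 < M k k := hM.diag_pos
  have hdet : IsUnit M.det := (isUnit_iff_isUnit_det M).1 hM.isUnit
  -- With `a = M k k`, the congruence `(M - a) M⁻¹ (M - a)ᴴ = M - 2a + a² M⁻¹` is positive
  -- semidefinite; its `k`-th diagonal entry is `a (a (M⁻¹) k k - 1)`.
  have hpsd := hM.inv.posSemidef.mul_mul_conjTranspose_same (M - M k k • 1)
  have hadj : (M - M k k • 1)ᴴ = M - M k k • 1 := by
    rw [conjTranspose_sub, hM.1.eq, conjTranspose_smul, conjTranspose_one, star_trivial]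
  have hexp : (M - M k k • 1) * M⁻¹ * (M - M k k • 1)
      = M - (2 * M k k) • 1 + (M k k ^ 2) • M⁻¹ := by
    simp only [sub_mul, mul_sub, smul_mul_assoc, mul_smul_comm, one_mul, mul_one,
      mul_nonsing_inv M hdet, nonsing_inv_mul M hdet]
    module
  rw [hadj, hexp] at hpsd
  have hk := hpsd.diag_nonneg (i := k)
  simp only [Matrix.add_apply, Matrix.sub_apply, Matrix.smul_apply, one_apply_eq,
    smul_eq_mul, mul_one] at hk
  have : 0 ≤ M k k * (M k k * M⁻¹ k k - 1) := by linarith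
  linarith [nonneg_of_mul_nonneg_right this hpos]
end

section
/- Let A be a real symmetric positive definite m×m matrix, let N be a real m×n matrix, let k be an index, and let e_k denote the k-th standard basis vector of ℝᵐ. For t ≥ 0 define the feedback gain K(t) = -(A + t·e_k·e_kᵀ)⁻¹·N. Then as t → ∞, every entry of the k-th row of K(t) tends to 0. In particular, in the limit of infinite barrier curvature on the k-th (saturated) control channel, the feedback gain of that channel vanishes and the channel becomes purely feedforward. -/
open Matrix Filter

/-!
Write `E = eₖ eₖᵀ`, `B = A + t E` and `a = (A⁻¹)ₖₖ`. From `A⁻¹ B = 1 + t A⁻¹ E`, multiplying by `B⁻¹ N`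
on the right and reading off row `k` gives
`(A⁻¹ N)ₖⱼ = (1 + t a) (B⁻¹ N)ₖⱼ`, since row `k` of `A⁻¹ E` is `a eₖᵀ`.
As `A⁻¹` is positive definite, `a > 0`, so `(B⁻¹ N)ₖⱼ = (A⁻¹ N)ₖⱼ / (1 + t a) → 0`.
-/

/-- Row `k` case of the Sherman–Morrison formula, in division-free form. -/
lemma inv_mul_row_eq {m n : ℕ} (A : Matrix (Fin m) (Fin m) ℝ) (hA : A.PosDef)
    (N : Matrix (Fin m) (Fin n) ℝ) (k : Fin m) (j : Fin n) {t : ℝ} (ht : 0 ≤ t) :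
    (A⁻¹ * N) k j = (1 + t * A⁻¹ k k) *
      ((A + t • vecMulVec (Pi.single k 1) (Pi.single k 1))⁻¹ * N : Matrix (Fin m) (Fin n) ℝ) k j := by
  set E : Matrix (Fin m) (Fin m) ℝ := vecMulVec (Pi.single k 1) (Pi.single k 1) with hE
  have hEpos : E.PosSemidef := by
    simpa using posSemidef_vecMulVec_self_star (Pi.single k (1 : ℝ) : Fin m → ℝ)
  have hB : (A + t • E).PosDef := hA.add_posSemidef (hEpos.smul ht)
  have hAd : IsUnit A.det := (isUnit_iff_isUnit_det A).1 hA.isUnit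
  have hBd : IsUnit (A + t • E).det := (isUnit_iff_isUnit_det _).1 hB.isUnit
  set X := (A + t • E)⁻¹ * N with hX
  have hBX : (A + t • E) * X = N := mul_nonsing_inv_cancel_left _ _ hBd
  have hrow : (A⁻¹ * (E * X)) k j = A⁻¹ k k * X k j := by
    rw [hE, vecMulVec_mul, mul_vecMulVec, vecMulVec_apply]
    simp
  rw [← hBX, Matrix.add_mul, Matrix.mul_add, nonsing_inv_mul_cancel_left _ _ hAd,
    Matrix.smul_mul, Matrix.mul_smul, Matrix.add_apply, Matrix.smul_apply, hrow, smul_eq_mul]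
  ring

/-- As the barrier curvature `t` on the `k`-th (saturated) control channel tends
to infinity, every entry of the `k`-th row of the feedback gain
`K(t) = -(A + t eₖ eₖᵀ)⁻¹ N` tends to `0`: the channel becomes purely
feedforward. -/
theorem saturated_channel_feedback_vanishes (m n : ℕ)
    (A : Matrix (Fin m) (Fin m) ℝ) (hA : A.PosDef)
    (N : Matrix (Fin m) (Fin n) ℝ) (k : Fin m)
    (K : ℝ → Matrix (Fin m) (Fin n) ℝ)
    (hK : ∀ t : ℝ, 0 ≤ t →
      K t = -((A + t • vecMulVec (Pi.single k 1) (Pi.single k 1))⁻¹ * N)) :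
    ∀ j : Fin n, Tendsto (fun t : ℝ => K t k j) atTop (nhds 0) := by
  intro j
  have ha : 0 < A⁻¹ k k := hA.inv.diag_pos
  have hlim : Tendsto (fun t : ℝ => -((A⁻¹ * N) k j / (1 + t * A⁻¹ k k))) atTop (nhds 0) := by
    have h : Tendsto (fun t : ℝ => 1 + t * A⁻¹ k k) atTop atTop :=
      tendsto_atTop_add_const_left _ _ (tendsto_id.atTop_mul_const ha)
    simpa using (h.const_div_atTop ((A⁻¹ * N) k j)).neg
  refine hlim.congr' ?_
  filter_upwards [eventually_ge_atTop (0 : ℝ)] with t ht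
  have hpos : 0 < 1 + t * A⁻¹ k k := by positivity
  rw [hK t ht, Matrix.neg_apply, inv_mul_row_eq A hA N k j ht, mul_div_cancel_left₀ _ hpos.ne']
end

section
/- Let ζ > 0 and C ≥ 0 be constants, let k be a fixed index, and let (M(t))_{t > 0} be a family of real symmetric positive definite m×m matrices such that (i) M(t) - ζ·I is positive semidefinite for all t, (ii) |M(t)_{kj}| ≤ C for all t and all j ≠ k, and (iii) M(t)_{kk} → ∞ as t → ∞. Then for every index j, the entry (M(t)⁻¹)_{kj} tends to 0 as t → ∞; that is, the entire k-th row of M(t)⁻¹ vanishes in the limit. -/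
open Matrix Filter

/-!
Fix an index `j` and let `x` be the `j`-th column of `M⁻¹`, so `M x = e_j`. The lower bound
`M ⪰ ζ I` gives `ζ ‖x‖² ≤ xᵀ M x = x_j`, whence first `x_j ≤ 1/ζ` and then `|x_i| ≤ 1/ζ` for
all `i`. The `k`-th row of `M x = e_j` reads
`M_kk x_k = δ_kj - ∑_{l ≠ k} M_kl x_l`, whose right-hand side is bounded by `1 + m C / ζ`.
Dividing by `M_kk → ∞` gives the claim.
-/

/-- A solution of `A x = e_j` with `A ⪰ ζ I` has all its coordinates bounded by `1/ζ`. -/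
lemma abs_le_of_mulVec_eq_single {m : ℕ} {ζ : ℝ} (hζ : 0 < ζ) {A : Matrix (Fin m) (Fin m) ℝ}
    (hA : (A - ζ • (1 : Matrix (Fin m) (Fin m) ℝ)).PosSemidef) {x : Fin m → ℝ} {j : Fin m}
    (hx : A *ᵥ x = Pi.single j 1) (i : Fin m) : |x i| ≤ ζ⁻¹ := by
  have h0 : ζ * ∑ l, x l * x l ≤ x j := by
    have h := hA.dotProduct_mulVec_nonneg x
    rw [sub_mulVec, hx, smul_mulVec, one_mulVec, star_trivial, dotProduct_sub,
      dotProduct_single, dotProduct_smul, smul_eq_mul, mul_one] at h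
    simp only [dotProduct] at h
    linarith
  have h1 : ∀ l, ζ * (x l * x l) ≤ x j := fun l =>
    (mul_le_mul_of_nonneg_left (Finset.single_le_sum (f := fun l => x l * x l)
      (fun a _ => mul_self_nonneg (x a)) (Finset.mem_univ l)) hζ.le).trans h0
  have hcancel : ζ * ζ⁻¹ = 1 := mul_inv_cancel₀ hζ.ne'
  have hinv : 0 < ζ⁻¹ := inv_pos.mpr hζ
  have hj : x j ≤ ζ⁻¹ := by
    by_contra! hlt
    have hpos : 0 < x j := hinv.trans hlt
    have h2 : 1 < ζ * x j := hcancel ▸ mul_lt_mul_of_pos_left hlt hζ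
    nlinarith [h1 j, mul_lt_mul_of_pos_right h2 hpos]
  have h3 : ζ * (x i * x i) ≤ ζ * (ζ⁻¹ * ζ⁻¹) := by
    rw [← mul_assoc ζ ζ⁻¹, hcancel, one_mul]
    exact (h1 i).trans hj
  exact abs_le_of_sq_le_sq (by simpa only [sq] using le_of_mul_le_mul_left h3 hζ) hinv.le

/-- If a family `M(t)` of symmetric positive definite matrices satisfies
`M(t) ⪰ ζ I` with `ζ > 0`, has the off-diagonal entries of its `k`-th row
uniformly bounded, and its `k`-th diagonal entry diverges as `t → ∞`, then the
entire `k`-th row of `M(t)⁻¹` tends to `0`. -/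
theorem diverging_diagonal_kills_inverse_row (m : ℕ) (ζ C : ℝ)
    (hζ : 0 < ζ) (hC : 0 ≤ C) (k : Fin m)
    (M : ℝ → Matrix (Fin m) (Fin m) ℝ)
    (hPD : ∀ t : ℝ, 0 < t → (M t).PosDef)
    (hlb : ∀ t : ℝ, 0 < t →
      (M t - ζ • (1 : Matrix (Fin m) (Fin m) ℝ)).PosSemidef)
    (hbound : ∀ t : ℝ, 0 < t → ∀ j : Fin m, j ≠ k → |M t k j| ≤ C)
    (hdiag : Tendsto (fun t : ℝ => M t k k) atTop atTop) :
    ∀ j : Fin m, Tendsto (fun t : ℝ => (M t)⁻¹ k j) atTop (nhds 0) := by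
  intro j
  have hlim : Tendsto (fun t : ℝ => (1 + m * (C * ζ⁻¹)) / M t k k) atTop (nhds 0) :=
    hdiag.const_div_atTop _
  refine squeeze_zero_norm' ?_ hlim
  filter_upwards [eventually_gt_atTop 0, hdiag.eventually_gt_atTop 0] with t ht hkk
  have hMM : M t * (M t)⁻¹ = 1 :=
    mul_nonsing_inv _ ((isUnit_iff_isUnit_det _).mp (hPD t ht).isUnit)
  have hcol : M t *ᵥ (fun i => (M t)⁻¹ i j) = Pi.single j 1 := by
    ext i
    have h := congrFun (congrFun hMM i) j
    rw [mul_apply, one_apply] at h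
    rw [Pi.single_apply]
    exact h
  have hx := abs_le_of_mulVec_eq_single hζ (hlb t ht) hcol
  have hrow : M t k k * (M t)⁻¹ k j + ∑ l ∈ Finset.univ.erase k, M t k l * (M t)⁻¹ l j
      = if k = j then 1 else 0 := by
    rw [Finset.add_sum_erase _ (fun l => M t k l * (M t)⁻¹ l j) (Finset.mem_univ k),
      ← mul_apply, hMM, one_apply]
  have hsum : |∑ l ∈ Finset.univ.erase k, M t k l * (M t)⁻¹ l j| ≤ m * (C * ζ⁻¹) := by
    have hnn : 0 ≤ C * ζ⁻¹ := mul_nonneg hC (inv_pos.mpr hζ).le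
    calc |∑ l ∈ Finset.univ.erase k, M t k l * (M t)⁻¹ l j|
        ≤ ∑ l ∈ Finset.univ.erase k, |M t k l * (M t)⁻¹ l j| := Finset.abs_sum_le_sum_abs _ _
      _ ≤ ∑ l ∈ Finset.univ.erase k, C * ζ⁻¹ := by
          refine Finset.sum_le_sum fun l hl => ?_
          rw [abs_mul]
          exact mul_le_mul (hbound t ht l (Finset.ne_of_mem_erase hl)) (hx l) (abs_nonneg _) hC
      _ ≤ ∑ _l : Fin m, C * ζ⁻¹ :=
          Finset.sum_le_sum_of_subset_of_nonneg (Finset.erase_subset _ _) fun _ _ _ => hnn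
      _ = m * (C * ζ⁻¹) := by simp
  have hdelta : |(if k = j then 1 else 0 : ℝ)| ≤ 1 := by split_ifs <;> simp
  have habs : |(M t)⁻¹ k j| * M t k k = |M t k k * (M t)⁻¹ k j| := by
    rw [abs_mul, abs_of_pos hkk, mul_comm]
  rw [Real.norm_eq_abs, le_div_iff₀ hkk, habs, eq_sub_of_add_eq hrow]
  exact (abs_sub _ _).trans (add_le_add hdelta hsum)
end

section
/- Let B be a real symmetric positive definite m×m matrix, let F be a real n×m matrix, let i be a fixed index, and let g = Fᵀ·e_i ∈ ℝᵐ be the transpose of the i-th row of F; assume g ≠ 0. Let N be a real m×n matrix and A_x a real n×n matrix. For t ≥ 0 define the control correction map δu(t, δx) = -(B + t·g·gᵀ)⁻¹·N·δx for δx ∈ ℝⁿ. Then for every δx ∈ ℝⁿ, the i-th component of F·δu(t, δx) tends to 0 as t → ∞, and consequently the i-th component of the closed-loop state deviation A_x·δx + F·δu(t, δx) tends to the i-th component of the open-loop deviation A_x·δx. -/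
open Matrix Filter

/-! The barrier acts only along `g`: pairing `(B + t g gᵀ) y = v` with `B⁻¹ g` gives the scalar
equation `(1 + t s) (g ⬝ᵥ y) = g ⬝ᵥ B⁻¹ v` with `s = g ⬝ᵥ B⁻¹ g > 0`
(`dotProduct_rankOne_inv`). Hence `g ⬝ᵥ y = O(1 / t)`. Since `g` is the `i`-th row of `F`, this
scalar is, up to sign, the `i`-th component of `F δu`. -/

theorem dotProduct_rankOne_inv {m : ℕ} {B : Matrix (Fin m) (Fin m) ℝ} (hB : B.PosDef)
    (g v : Fin m → ℝ) {t : ℝ} (ht : 0 ≤ t) :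
    (1 + t * (g ⬝ᵥ B⁻¹ *ᵥ g)) * (g ⬝ᵥ (B + t • vecMulVec g g)⁻¹ *ᵥ v) = g ⬝ᵥ B⁻¹ *ᵥ v := by
  have hM : (B + t • vecMulVec g g).PosDef :=
    hB.add_posSemidef ((by simpa using posSemidef_vecMulVec_self_star g :
      (vecMulVec g g).PosSemidef).smul ht)
  have hMdet := (isUnit_iff_isUnit_det _).mp hM.isUnit
  have hBdet := (isUnit_iff_isUnit_det _).mp hB.isUnit
  set y := (B + t • vecMulVec g g)⁻¹ *ᵥ v with hy
  have hv : B *ᵥ y + (t * (g ⬝ᵥ y)) • g = v := by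
    have h : (B + t • vecMulVec g g) *ᵥ y = v := by
      rw [hy, mulVec_mulVec, mul_nonsing_inv _ hMdet, one_mulVec]
    rw [← h, add_mulVec, smul_mulVec, vecMulVec_mulVec, op_smul_eq_smul, smul_smul]
  rw [← hv, mulVec_add, mulVec_mulVec, nonsing_inv_mul _ hBdet, one_mulVec, mulVec_smul,
    dotProduct_add, dotProduct_smul, smul_eq_mul]
  ring

/-- With `g = Fᵀ eᵢ ≠ 0`, the control correction
`δu(t, δx) = -(B + t g gᵀ)⁻¹ N δx` satisfies: the `i`-th component of
`F δu(t, δx)` tends to `0` as `t → ∞`, so the `i`-th component of the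
closed-loop deviation `A_x δx + F δu(t, δx)` tends to the `i`-th component of
the open-loop deviation `A_x δx`. -/
theorem state_barrier_decouples_feedback (m n : ℕ)
    (B : Matrix (Fin m) (Fin m) ℝ) (hB : B.PosDef)
    (F : Matrix (Fin n) (Fin m) ℝ) (i : Fin n)
    (g : Fin m → ℝ) (hg : g = Fᵀ *ᵥ Pi.single i 1) (hg0 : g ≠ 0)
    (N : Matrix (Fin m) (Fin n) ℝ) (Ax : Matrix (Fin n) (Fin n) ℝ)
    (δu : ℝ → (Fin n → ℝ) → (Fin m → ℝ))
    (hδu : ∀ (t : ℝ) (δx : Fin n → ℝ),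
      δu t δx = -((B + t • vecMulVec g g)⁻¹ *ᵥ (N *ᵥ δx))) :
    ∀ δx : Fin n → ℝ,
      Tendsto (fun t : ℝ => (F *ᵥ δu t δx) i) atTop (nhds 0) ∧
      Tendsto (fun t : ℝ => (Ax *ᵥ δx + F *ᵥ δu t δx) i) atTop
        (nhds ((Ax *ᵥ δx) i)) := by
  intro δx
  have hrow : ∀ u : Fin m → ℝ, (F *ᵥ u) i = g ⬝ᵥ u := by
    intro u
    have : g = F i := by
      rw [hg]
      ext j
      simp
    rw [this]
    rfl
  have hs : 0 < g ⬝ᵥ B⁻¹ *ᵥ g := by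
    simpa using hB.inv.dotProduct_mulVec_pos hg0
  have hlim : Tendsto (fun t : ℝ => (F *ᵥ δu t δx) i) atTop (nhds 0) := by
    have hden : Tendsto (fun t : ℝ => 1 + t * (g ⬝ᵥ B⁻¹ *ᵥ g)) atTop atTop :=
      tendsto_atTop_add_const_left _ _ (tendsto_id.atTop_mul_const hs)
    refine (hden.const_div_atTop (-(g ⬝ᵥ B⁻¹ *ᵥ (N *ᵥ δx)))).congr' ?_
    filter_upwards [eventually_ge_atTop 0] with t ht
    have hpos : 0 < 1 + t * (g ⬝ᵥ B⁻¹ *ᵥ g) := by positivity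
    rw [hrow, hδu, dotProduct_neg, div_eq_iff hpos.ne', ← dotProduct_rankOne_inv hB g _ ht]
    ring
  refine ⟨hlim, ?_⟩
  simpa using hlim.const_add ((Ax *ᵥ δx) i)
end
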